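/- arXiv:1101.1724 — 2 statements merged into one kernel-verified Lean document; each statement's English description precedes it below -/
import Mathlib

section
/- For every l ≥ 1, τ_l = min{n ≥ 0 : S̄_n = 2l}; that is, the crossing times τ_l of the walk S are exactly the first hitting times of the even levels 2l by its Csaki–Vincze transform S̄. -/
/-!
Let `ε l = (-1) ^ l * X 1`. On the interval `[τ l, τ (l + 1)]` the walk `ε l * S` starts at `0`,
steps up to `1`, and cannot become negative without a crossing; hence it is nonnegative there,
and the crossing at `τ (l + 1)` takes it from `0` to `-1`, which is the same situation again
for `ε (l + 1) = -ε l`. The increments of `S̄` are those of `-ε l * S` shifted by one, so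
`S̄ n = 2 * l + 1 - ε l * S (n + 1)` for `τ l ≤ n ≤ τ (l + 1)`: this is at most `2 * l + 1` before
`τ (l + 1)` and equals `2 * l + 2` at `τ (l + 1)`.
-/

noncomputable section

/-- The walk `S` associated with the sign sequence `X : {1,2,…} → {−1,1}`:
`S 0 = 0`, `S n = X 1 + ⋯ + X n`. -/
def cvWalk (X : ℕ → ℤ) (n : ℕ) : ℤ := ∑ j ∈ Finset.Icc 1 n, X j

/-- The crossing times of `S`: `τ 0 = 0` and
`τ (l+1) = min {i > τ l : S (i-1) * S (i+1) < 0}`. -/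
def cvTau (X : ℕ → ℤ) : ℕ → ℕ
  | 0 => 0
  | l + 1 => sInf {i : ℕ | cvTau X l < i ∧ cvWalk X (i - 1) * cvWalk X (i + 1) < 0}

/-- The increments of the Csaki–Vincze transform `S̄ = T(S)`:
`X̄ j = Σ_{l ≥ 0} (−1)^(l+1) · X 1 · X (j+1) · 1_{τ l + 1 ≤ j ≤ τ (l+1)}`
(the sum may be truncated to `l ≤ j` since `l ≤ τ l` whenever `τ l + 1 ≤ j`). -/
def cvXbar (X : ℕ → ℤ) (j : ℕ) : ℤ :=
  ∑ l ∈ Finset.range (j + 1),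
    (-1 : ℤ) ^ (l + 1) * X 1 * X (j + 1) *
      (if cvTau X l + 1 ≤ j ∧ j ≤ cvTau X (l + 1) then 1 else 0)

/-- The Csaki–Vincze transform `S̄ = T(S)`. -/
def cvSbar (X : ℕ → ℤ) (n : ℕ) : ℤ := ∑ j ∈ Finset.Icc 1 n, cvXbar X j

/-- `Ȳ`-type process of a walk `f`: `max_{0 ≤ k ≤ n} f k − f n`. -/
def cvYof (f : ℕ → ℤ) (n : ℕ) : ℤ :=
  (Finset.range (n + 1)).sup' Finset.nonempty_range_add_one f - f n

/-- `Ȳ n = max_{0 ≤ k ≤ n} S̄ k − S̄ n`. -/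
def cvYbar (X : ℕ → ℤ) (n : ℕ) : ℤ := cvYof (cvSbar X) n

/-- A nearest-neighbour walk on `ℤ`, with arbitrary starting point. -/
def IsNearestNeighbor (S : ℕ → ℤ) : Prop := ∀ n, |S (n + 1) - S n| = 1

/-- The walk `S` changes sign around time `i`. Only meaningful for `1 ≤ i`, since `i - 1`
is truncated; it is written in this form to match `cvTau`. -/
def IsCrossing (S : ℕ → ℤ) (i : ℕ) : Prop := S (i - 1) * S (i + 1) < 0

theorem isCrossing_const_mul_iff {S : ℕ → ℤ} {c : ℤ} (hc : c ≠ 0) {i : ℕ} :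
    IsCrossing (fun n => c * S n) i ↔ IsCrossing S i := by
  have hc' : 0 < c * c := mul_self_pos.2 hc
  simp only [IsCrossing, mul_mul_mul_comm c, ← not_le, mul_nonneg_iff_of_pos_left hc']

namespace IsNearestNeighbor

variable {S : ℕ → ℤ} {n : ℕ}

theorem const_mul (hS : IsNearestNeighbor S) {c : ℤ} (hc : |c| = 1) :
    IsNearestNeighbor fun n => c * S n := fun n => by
  rw [← mul_sub, abs_mul, hc, hS n, one_mul]

theorem eq_add_one_or_eq_sub_one (hS : IsNearestNeighbor S) (n : ℕ) :
    S (n + 1) = S n + 1 ∨ S (n + 1) = S n - 1 := by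
  have := eq_or_eq_neg_of_abs_eq (hS n)
  omega

theorem eq_zero_of_isCrossing (hS : IsNearestNeighbor S) (h : IsCrossing S (n + 1)) :
    S (n + 1) = 0 := by
  have := hS.eq_add_one_or_eq_sub_one n
  have := hS.eq_add_one_or_eq_sub_one (n + 1)
  rcases mul_neg_iff.1 h with h | h <;> simp only [Nat.add_sub_cancel] at h <;> omega

theorem eq_neg_one_of_isCrossing (hS : IsNearestNeighbor S) (h0 : 0 ≤ S n)
    (h : IsCrossing S (n + 1)) : S (n + 2) = -1 := by
  have hneg : S (n + 2) < 0 := neg_of_mul_neg_right h h0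
  have hzero := hS.eq_zero_of_isCrossing h
  have : S (n + 2) = S (n + 1) + 1 ∨ S (n + 2) = S (n + 1) - 1 :=
    hS.eq_add_one_or_eq_sub_one (n + 1)
  omega

theorem nonneg_of_not_isCrossing (hS : IsNearestNeighbor S) (h0 : 0 ≤ S n) (h1 : 0 ≤ S (n + 1))
    (h : ¬IsCrossing S (n + 1)) : 0 ≤ S (n + 2) := by
  by_contra! hneg
  have := hS.eq_add_one_or_eq_sub_one n
  have : S (n + 2) = S (n + 1) + 1 ∨ S (n + 2) = S (n + 1) - 1 :=
    hS.eq_add_one_or_eq_sub_one (n + 1)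
  have hpos : 0 < S n := by omega
  exact h (mul_neg_of_pos_of_neg hpos hneg)

theorem nonneg_of_forall_not_isCrossing (hS : IsNearestNeighbor S) {a b : ℕ} (ha : 0 ≤ S a)
    (ha' : 0 ≤ S (a + 1)) (h : ∀ i, a < i → i < b → ¬IsCrossing S i) (han : a ≤ n)
    (hnb : n ≤ b) : 0 ≤ S n := by
  obtain ⟨d, rfl⟩ := Nat.exists_eq_add_of_le han
  clear han
  induction d using Nat.twoStepInduction with
  | zero => exact ha
  | one => exact ha'
  | more d ih ih' =>
    exact hS.nonneg_of_not_isCrossing (ih (by omega)) (ih' (by omega))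
      (h (a + d + 1) (by omega) (by omega))

end IsNearestNeighbor

theorem cvWalk_succ (X : ℕ → ℤ) (n : ℕ) : cvWalk X (n + 1) = cvWalk X n + X (n + 1) :=
  Finset.sum_Icc_succ_top (by omega) X

theorem cvSbar_succ (X : ℕ → ℤ) (n : ℕ) : cvSbar X (n + 1) = cvSbar X n + cvXbar X (n + 1) :=
  Finset.sum_Icc_succ_top (by omega) (cvXbar X)

/-- The sign `ε l` of the walk on its excursion from `τ l` to `τ (l + 1)`. -/
def cvSign (X : ℕ → ℤ) (l : ℕ) : ℤ := (-1) ^ l * X 1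

theorem cvSign_succ (X : ℕ → ℤ) (l : ℕ) : cvSign X (l + 1) = -cvSign X l := by
  simp only [cvSign, pow_succ, mul_neg_one, neg_mul]

variable {X : ℕ → ℤ} {l n : ℕ}

theorem isNearestNeighbor_cvWalk (hX : ∀ j, 1 ≤ j → X j = 1 ∨ X j = -1) :
    IsNearestNeighbor (cvWalk X) := fun n => by
  rw [cvWalk_succ, add_sub_cancel_left]
  exact (abs_eq zero_le_one).2 (hX (n + 1) n.succ_pos)

theorem abs_cvSign (hS : IsNearestNeighbor (cvWalk X)) (l : ℕ) : |cvSign X l| = 1 := by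
  have hX1 : |X 1| = 1 := by simpa [cvWalk] using hS 0
  rw [cvSign, abs_mul, abs_neg_one_pow, hX1, one_mul]

theorem cvSign_ne_zero (hS : IsNearestNeighbor (cvWalk X)) (l : ℕ) : cvSign X l ≠ 0 :=
  abs_pos.1 ((abs_cvSign hS l).symm ▸ one_pos)

theorem isLeast_cvTau_succ (hinf : {i | IsCrossing (cvWalk X) i}.Infinite) (l : ℕ) :
    IsLeast {i | cvTau X l < i ∧ IsCrossing (cvWalk X) i} (cvTau X (l + 1)) := by
  obtain ⟨i, hi, hlt⟩ := hinf.exists_gt (cvTau X l)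
  exact ⟨Nat.sInf_mem ⟨i, hlt, hi⟩, fun _ => Nat.sInf_le⟩

theorem strictMono_cvTau (hinf : {i | IsCrossing (cvWalk X) i}.Infinite) :
    StrictMono (cvTau X) :=
  strictMono_nat_of_lt_succ fun l => (isLeast_cvTau_succ hinf l).1.1

theorem cvWalk_cvTau (hS : IsNearestNeighbor (cvWalk X))
    (hinf : {i | IsCrossing (cvWalk X) i}.Infinite) (l : ℕ) : cvWalk X (cvTau X l) = 0 := by
  cases l with
  | zero => simp [cvTau, cvWalk]
  | succ l =>
    obtain ⟨hlt, hcross⟩ := (isLeast_cvTau_succ hinf l).1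
    obtain ⟨m, hm⟩ := Nat.exists_eq_add_one_of_ne_zero (Nat.ne_zero_of_lt hlt)
    rw [hm] at hcross ⊢
    exact hS.eq_zero_of_isCrossing hcross

theorem cvSign_mul_cvWalk_nonneg (hS : IsNearestNeighbor (cvWalk X))
    (hinf : {i | IsCrossing (cvWalk X) i}.Infinite)
    (hstart : 0 ≤ cvSign X l * cvWalk X (cvTau X l + 1)) (hl : cvTau X l ≤ n)
    (hn : n ≤ cvTau X (l + 1)) : 0 ≤ cvSign X l * cvWalk X n := by
  refine (hS.const_mul (abs_cvSign hS l)).nonneg_of_forall_not_isCrossing ?_ hstart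
    (fun i hi hi' hcross => ?_) hl hn
  · simp only [cvWalk_cvTau hS hinf l, mul_zero, le_refl]
  · have hcross' := (isCrossing_const_mul_iff (cvSign_ne_zero hS l)).1 hcross
    exact ((isLeast_cvTau_succ hinf l).2 ⟨hi, hcross'⟩).not_gt hi'

theorem cvSign_mul_cvWalk_cvTau_add_one (hS : IsNearestNeighbor (cvWalk X))
    (hinf : {i | IsCrossing (cvWalk X) i}.Infinite) (l : ℕ) :
    cvSign X l * cvWalk X (cvTau X l + 1) = 1 := by
  induction l with
  | zero =>
    have hsq : cvSign X 0 * cvSign X 0 = 1 := by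
      rw [← abs_mul_abs_self, abs_cvSign hS 0, one_mul]
    simpa [cvSign, cvTau, cvWalk] using hsq
  | succ l ih =>
    obtain ⟨hlt, hcross⟩ := (isLeast_cvTau_succ hinf l).1
    obtain ⟨m, hm⟩ := Nat.exists_eq_add_one_of_ne_zero (Nat.ne_zero_of_lt hlt)
    have hnonneg : 0 ≤ cvSign X l * cvWalk X m :=
      cvSign_mul_cvWalk_nonneg hS hinf (by omega) (by omega) (by omega)
    rw [hm] at hcross ⊢
    have hcross' := (isCrossing_const_mul_iff (cvSign_ne_zero hS l)).2 hcross
    have hend : cvSign X l * cvWalk X (m + 2) = -1 :=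
      (hS.const_mul (abs_cvSign hS l)).eq_neg_one_of_isCrossing hnonneg hcross'
    rw [cvSign_succ, neg_mul, hend, neg_neg]

theorem cvXbar_eq_neg_cvSign_mul (hτ : StrictMono (cvTau X)) {j : ℕ} (hl : cvTau X l < j)
    (hj : j ≤ cvTau X (l + 1)) : cvXbar X j = -cvSign X l * X (j + 1) := by
  have hmem : l ∈ Finset.range (j + 1) :=
    Finset.mem_range.2 (((hτ.le_apply).trans_lt hl).trans (Nat.lt_succ_self j))
  have huniq : ∀ k, cvTau X k + 1 ≤ j → j ≤ cvTau X (k + 1) → k = l := fun k hk hk' =>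
    le_antisymm (Nat.lt_succ_iff.1 (hτ.lt_iff_lt.1 (hk.trans hj)))
      (Nat.lt_succ_iff.1 (hτ.lt_iff_lt.1 (hl.trans_le hk')))
  rw [cvXbar, Finset.sum_eq_single_of_mem l hmem fun k _ hk => ?_, if_pos ⟨hl, hj⟩, mul_one,
    ← cvSign, cvSign_succ]
  rw [if_neg fun h => hk (huniq k h.1 h.2), mul_zero]

theorem cvSbar_sub_cvSbar_cvTau (hτ : StrictMono (cvTau X)) (hl : cvTau X l ≤ n)
    (hn : n ≤ cvTau X (l + 1)) :
    cvSbar X n - cvSbar X (cvTau X l) =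
      cvSign X l * cvWalk X (cvTau X l + 1) - cvSign X l * cvWalk X (n + 1) := by
  induction n, hl using Nat.le_induction with
  | base => simp only [sub_self]
  | succ n hln ih =>
    rw [cvSbar_succ, cvXbar_eq_neg_cvSign_mul hτ (by omega) hn, cvWalk_succ X (n + 1)]
    linear_combination ih (by omega)

theorem cvSbar_cvTau (hS : IsNearestNeighbor (cvWalk X))
    (hinf : {i | IsCrossing (cvWalk X) i}.Infinite) (l : ℕ) :
    cvSbar X (cvTau X l) = 2 * l := by
  induction l with
  | zero => simp [cvTau, cvSbar]
  | succ l ih =>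
    have hτ := strictMono_cvTau hinf
    have hdiff := cvSbar_sub_cvSbar_cvTau hτ (hτ (Nat.lt_succ_self l)).le le_rfl
    have hstart := cvSign_mul_cvWalk_cvTau_add_one hS hinf l
    have hend := cvSign_mul_cvWalk_cvTau_add_one hS hinf (l + 1)
    rw [cvSign_succ] at hend
    push_cast
    linear_combination hdiff + ih + hstart + hend

theorem cvSbar_eq (hS : IsNearestNeighbor (cvWalk X))
    (hinf : {i | IsCrossing (cvWalk X) i}.Infinite) (hl : cvTau X l ≤ n)
    (hn : n ≤ cvTau X (l + 1)) :
    cvSbar X n = 2 * l + 1 - cvSign X l * cvWalk X (n + 1) := by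
  linear_combination cvSbar_sub_cvSbar_cvTau (strictMono_cvTau hinf) hl hn +
    cvSbar_cvTau hS hinf l + cvSign_mul_cvWalk_cvTau_add_one hS hinf l

theorem cvSbar_lt_of_lt_cvTau (hS : IsNearestNeighbor (cvWalk X))
    (hinf : {i | IsCrossing (cvWalk X) i}.Infinite) (hn : n < cvTau X l) :
    cvSbar X n < 2 * l := by
  induction l with
  | zero => exact absurd hn n.not_lt_zero
  | succ l ih =>
    push_cast
    rcases lt_or_ge n (cvTau X l) with hlt | hge
    · linarith [ih hlt]
    · have hstart := cvSign_mul_cvWalk_cvTau_add_one hS hinf l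
      have hnonneg : 0 ≤ cvSign X l * cvWalk X (n + 1) :=
        cvSign_mul_cvWalk_nonneg hS hinf (by omega) (by omega) hn
      rw [cvSbar_eq hS hinf hge hn.le]
      linarith

theorem isLeast_cvTau_setOf_cvSbar_eq (hS : IsNearestNeighbor (cvWalk X))
    (hinf : {i | IsCrossing (cvWalk X) i}.Infinite) (l : ℕ) :
    IsLeast {n | cvSbar X n = 2 * l} (cvTau X l) :=
  ⟨cvSbar_cvTau hS hinf l, fun _ hn =>
    not_lt.1 fun hlt => (cvSbar_lt_of_lt_cvTau hS hinf hlt).ne hn⟩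

/-- For every `l ≥ 1`, the crossing time `τ l` of the walk `S` is exactly the first
hitting time of the even level `2l` by the Csaki–Vincze transform `S̄ = T(S)`. -/
theorem cvTau_eq_hitting_time (X : ℕ → ℤ) (hX : ∀ j, 1 ≤ j → X j = 1 ∨ X j = -1)
    (hinf : {i : ℕ | 1 ≤ i ∧ cvWalk X (i - 1) * cvWalk X (i + 1) < 0}.Infinite)
    (l : ℕ) (hl : 1 ≤ l) :
    cvTau X l = sInf {n : ℕ | cvSbar X n = 2 * l} := by
  have hcross : {i | IsCrossing (cvWalk X) i}.Infinite := hinf.mono fun _ hi => hi.2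
  exact (isLeast_cvTau_setOf_cvSbar_eq (isNearestNeighbor_cvWalk hX) hcross l).csInf_eq.symm
end
end

section
/- For all integers p < n < q: if min_{p ≤ h ≤ q} S_h = min_{n ≤ h ≤ q} S_h, then e(Ψ_{p,q}(0)) = e(Ψ_{n,q}(0)). -/
noncomputable section

/-- The star graph `G` with `N` half-lines `D_1, …, D_N` glued at the origin, realized by
canonical representatives in `Fin N × ℝ`: a point is a pair (ray index, distance to the
origin), the origin being represented on the ray of index `N - 1` (i.e. the ray `e_N`,
matching the convention `e(0) = e_N`). -/
def StarG (N : ℕ) : Type :=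
  {p : Fin N × ℝ // 0 ≤ p.2 ∧ (p.2 = 0 → (p.1 : ℕ) = N - 1)}

namespace StarG

variable {N : ℕ}

instance : DecidableEq (StarG N) :=
  inferInstanceAs (DecidableEq {p : Fin N × ℝ // 0 ≤ p.2 ∧ (p.2 = 0 → (p.1 : ℕ) = N - 1)})

instance : MeasurableSpace (StarG N) :=
  inferInstanceAs (MeasurableSpace {p : Fin N × ℝ // 0 ≤ p.2 ∧ (p.2 = 0 → (p.1 : ℕ) = N - 1)})

/-- The ray index `e(x)` of a point, with the convention `e(0) = e_N`. -/
def ray (x : StarG N) : Fin N := x.1.1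

/-- `|x| = d(x, 0)`, the distance from `x` to the origin. -/
def nrm (x : StarG N) : ℝ := x.1.2

/-- The distance on `G`: `d(h·e_i, h'·e_j) = |h − h'|` if `i = j` and `h + h'` if
`i ≠ j`. -/
def dist (x y : StarG N) : ℝ :=
  if x.ray = y.ray then |x.nrm - y.nrm| else x.nrm + y.nrm

/-- The origin `0` of `G` (requires `N ≥ 1`). -/
def origin (hN : 1 ≤ N) : StarG N :=
  ⟨(⟨N - 1, by omega⟩, 0), le_refl 0, fun _ => rfl⟩

/-- The point `h·e_i` (sent to the origin when `h ≤ 0`; in particular `0·e_i = 0` for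
every `i`).  For `x` on the ray `D_i` and `t ≥ −|x|`, the point `x + e(x)·t` is
`pt hN (ray x) (nrm x + t)`. -/
def pt (hN : 1 ≤ N) (i : Fin N) (h : ℝ) : StarG N :=
  if hh : 0 < h then ⟨(i, h), le_of_lt hh, fun h0 => absurd h0 (ne_of_gt hh)⟩
  else origin hN

/-- `x ∈ D_i` : the point `x` lies on the `i`-th half-line (the origin lies on all). -/
def memRay (x : StarG N) (i : Fin N) : Prop := x.ray = i ∨ x.nrm = 0

/-- `x ∈ G_ℕ` : the distance from `x` to the origin is a natural number. -/
def isLattice (x : StarG N) : Prop := ∃ m : ℕ, x.nrm = (m : ℝ)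

end StarG

/-- `min_{p ≤ h ≤ n} S h` (junk value `0` when `n < p`). -/
def walkMin (S : ℤ → ℤ) (p n : ℤ) : ℤ :=
  if h : p ≤ n then (Finset.Icc p n).inf' (Finset.nonempty_Icc.mpr h) S else 0

/-- `S⁺_{p,n} = S_{p,n} − min_{p ≤ h ≤ n} S_{p,h} = S n − min_{p ≤ h ≤ n} S h`. -/
def walkPlus (S : ℤ → ℤ) (p n : ℤ) : ℤ := S n - walkMin S p n

/-- The one-step map `Ψ_{p,p+1}` on `G_ℕ`:
`Ψ_{p,p+1}(x) = x + e(x)·S_{p,p+1}` for `x ≠ 0` and `Ψ_{p,p+1}(0) = S⁺_{p,p+1}·η_p`. -/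
def psiStep {N : ℕ} (hN : 1 ≤ N) (S : ℤ → ℤ) (η : ℤ → Fin N) (p : ℤ) (x : StarG N) :
    StarG N :=
  if x.nrm = 0 then StarG.pt hN (η p) ((walkPlus S p (p + 1) : ℤ) : ℝ)
  else StarG.pt hN x.ray (x.nrm + ((S (p + 1) - S p : ℤ) : ℝ))

/-- `k`-fold composition: `psiAux hN S η p k = Ψ_{p+k-1,p+k} ∘ ⋯ ∘ Ψ_{p,p+1}`. -/
def psiAux {N : ℕ} (hN : 1 ≤ N) (S : ℤ → ℤ) (η : ℤ → Fin N) (p : ℤ) :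
    ℕ → StarG N → StarG N
  | 0 => id
  | k + 1 => fun x => psiStep hN S η (p + k) (psiAux hN S η p k x)

/-- The discrete flow of mappings `Ψ_{p,n} = Ψ_{n−1,n} ∘ ⋯ ∘ Ψ_{p,p+1}` (the identity
when `n ≤ p`). -/
def psiFlow {N : ℕ} (hN : 1 ≤ N) (S : ℤ → ℤ) (η : ℤ → Fin N) (p n : ℤ) (x : StarG N) :
    StarG N :=
  psiAux hN S η p (n - p).toNat x

/-!
Along the flow `|Ψ_{p,n}(x)|` stays below `S n - m`, for any lower bound `m` of `S` on `[p, n]`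
such that `|x| ≤ S p - m`. At a time `h` where `S` attains its minimum over `[p, h]` one may take
`m = S h`, so a trajectory started from the origin at time `p` is back at the origin at time `h`.
If the minima over `[p, q]` and `[n, q]` agree, a minimizer `h` in `[n, q]` serves both starting
times, and from `h` on the two trajectories coincide.
-/

namespace StarG

variable {N : ℕ} (hN : 1 ≤ N)

theorem nrm_pt (i : Fin N) (h : ℝ) : (pt hN i h).nrm = max 0 h := by
  rcases lt_or_ge 0 h with hh | hh
  · exact (congrArg nrm (dif_pos hh)).trans (max_eq_right hh.le).symm
  · exact (congrArg nrm (dif_neg hh.not_gt)).trans (max_eq_left hh).symm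

theorem eq_origin_of_nrm_nonpos {x : StarG N} (hx : x.nrm ≤ 0) : x = origin hN :=
  have hx₀ : x.nrm = 0 := le_antisymm hx x.2.1
  Subtype.ext (Prod.ext (Fin.ext (x.2.2 hx₀)) hx₀)

end StarG

section Walk

variable {S : ℤ → ℤ} {p n : ℤ}

theorem le_walkMin_iff (hpn : p ≤ n) {m : ℤ} :
    m ≤ walkMin S p n ↔ ∀ j ∈ Set.Icc p n, m ≤ S j := by
  simp only [walkMin, dif_pos hpn, Finset.le_inf'_iff, Finset.mem_Icc, Set.mem_Icc]

theorem exists_walkMin_eq (S : ℤ → ℤ) (hpn : p ≤ n) :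
    ∃ h ∈ Set.Icc p n, walkMin S p n = S h := by
  obtain ⟨h, hh, hmin⟩ := Finset.exists_mem_eq_inf' (Finset.nonempty_Icc.mpr hpn) S
  exact ⟨h, Finset.mem_Icc.mp hh, by rw [walkMin, dif_pos hpn, hmin]⟩

end Walk

section Flow

variable {N : ℕ} (hN : 1 ≤ N) (S : ℤ → ℤ) (η : ℤ → Fin N) {p n q : ℤ}

theorem psiFlow_self (p : ℤ) (x : StarG N) : psiFlow hN S η p p x = x := by
  simp only [psiFlow, sub_self, Int.toNat_zero, psiAux, id]

theorem psiFlow_add_one (hpn : p ≤ n) (x : StarG N) :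
    psiFlow hN S η p (n + 1) x = psiStep hN S η n (psiFlow hN S η p n x) := by
  obtain ⟨k, rfl⟩ := Int.le.dest hpn
  have hk : (p + k - p).toNat = k := by omega
  have hk' : (p + k + 1 - p).toNat = k + 1 := by omega
  simp only [psiFlow, hk, hk', psiAux]

theorem psiFlow_comp (hpn : p ≤ n) (hnq : n ≤ q) (x : StarG N) :
    psiFlow hN S η n q (psiFlow hN S η p n x) = psiFlow hN S η p q x := by
  induction q, hnq using Int.leInduction with
  | base => exact psiFlow_self hN S η n _
  | succ q hnq ih =>
    rw [psiFlow_add_one hN S η hnq, ih, psiFlow_add_one hN S η (hpn.trans hnq)]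

variable {S} {m : ℤ} {x : StarG N}

theorem nrm_psiStep_le (hm : ∀ j ∈ Set.Icc p (p + 1), m ≤ S j) (hx : x.nrm ≤ S p - m) :
    (psiStep hN S η p x).nrm ≤ S (p + 1) - m := by
  have hend : (m : ℝ) ≤ S (p + 1) := by exact_mod_cast hm (p + 1) (by simp)
  unfold psiStep
  split_ifs
  · have hmin : (m : ℝ) ≤ walkMin S p (p + 1) := by
      exact_mod_cast (le_walkMin_iff (by omega)).mpr hm
    rw [StarG.nrm_pt, walkPlus, Int.cast_sub]
    exact max_le (sub_nonneg.mpr hend) (by linarith)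
  · rw [StarG.nrm_pt, Int.cast_sub]
    exact max_le (sub_nonneg.mpr hend) (by linarith)

theorem nrm_psiFlow_le (hpn : p ≤ n) (hm : ∀ j ∈ Set.Icc p n, m ≤ S j)
    (hx : x.nrm ≤ S p - m) : (psiFlow hN S η p n x).nrm ≤ S n - m := by
  induction n, hpn using Int.leInduction with
  | base => rwa [psiFlow_self]
  | succ n hpn ih =>
    rw [psiFlow_add_one hN S η hpn]
    exact nrm_psiStep_le hN η (fun j hj => hm j ⟨hpn.trans hj.1, hj.2⟩)
      (ih fun j hj => hm j ⟨hj.1, hj.2.trans (by omega)⟩)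

theorem psiFlow_eq_origin_of_isMinOn (hpn : p ≤ n) (hmin : IsMinOn S (Set.Icc p n) n)
    (hx : x.nrm ≤ S p - S n) : psiFlow hN S η p n x = StarG.origin hN :=
  StarG.eq_origin_of_nrm_nonpos hN <|
    (nrm_psiFlow_le hN η hpn (isMinOn_iff.mp hmin) hx).trans_eq (sub_self _)

theorem psiFlow_origin_eq_of_isMinOn (hpn : p ≤ n) (hnq : n ≤ q)
    (hmin : IsMinOn S (Set.Icc p n) n) :
    psiFlow hN S η p q (StarG.origin hN) = psiFlow hN S η n q (StarG.origin hN) := by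
  have hp : (S n : ℝ) ≤ S p := by exact_mod_cast isMinOn_iff.mp hmin p ⟨le_rfl, hpn⟩
  have hnrm : (StarG.origin hN).nrm ≤ S p - S n := sub_nonneg.mpr hp
  rw [← psiFlow_comp hN S η hpn hnq, psiFlow_eq_origin_of_isMinOn hN η hpn hmin hnrm]

theorem psiFlow_ray_eq_of_min_eq_general (hpn : p ≤ n) (hnq : n ≤ q)
    (hmin : walkMin S p q = walkMin S n q) :
    psiFlow hN S η p q (StarG.origin hN) = psiFlow hN S η n q (StarG.origin hN) := by
  obtain ⟨h, ⟨hnh, hhq⟩, hh⟩ := exists_walkMin_eq S hnq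
  have hSh : IsMinOn S (Set.Icc p q) h :=
    isMinOn_iff.mpr <| (le_walkMin_iff (hpn.trans hnq)).mp (hmin.trans hh).ge
  calc
    psiFlow hN S η p q (StarG.origin hN) = psiFlow hN S η h q (StarG.origin hN) :=
      psiFlow_origin_eq_of_isMinOn hN η (hpn.trans hnh) hhq
        (hSh.on_subset (Set.Icc_subset_Icc_right hhq))
    _ = psiFlow hN S η n q (StarG.origin hN) :=
      (psiFlow_origin_eq_of_isMinOn hN η hnh hhq
        (hSh.on_subset (Set.Icc_subset_Icc hpn hhq))).symm

end Flow

/-- For all integers `p < n < q`: if `min_{p ≤ h ≤ q} S h = min_{n ≤ h ≤ q} S h`, then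
`e(Ψ_{p,q}(0)) = e(Ψ_{n,q}(0))`. -/
theorem psiFlow_ray_eq_of_min_eq (N : ℕ) (hN : 1 ≤ N) (S : ℤ → ℤ)
    (hS : ∀ n : ℤ, S n - S (n - 1) = 1 ∨ S n - S (n - 1) = -1)
    (η : ℤ → Fin N) (p n q : ℤ) (hpn : p < n) (hnq : n < q)
    (hmin : walkMin S p q = walkMin S n q) :
    (psiFlow hN S η p q (StarG.origin hN)).ray = (psiFlow hN S η n q (StarG.origin hN)).ray :=
  congrArg StarG.ray (psiFlow_ray_eq_of_min_eq_general hN η hpn.le hnq.le hmin)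
end
end
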